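/- For every integer n ≥ 2, the number of admissible tilings of the positions 1,…,n equals P(n+5), where P is the Padovan sequence. (Equivalently: the number of summands in the expansion of the Kauffman bracket of the 2-bridge Chebyshev diagram T(3,b), which are in bijection with admissible tilings of length n = b-1, is the Padovan number P(b+4), an offset of OEIS A000931.) -/

import Mathlib

/-!
Removing the initial block of an admissible tiling leaves a *tail*: a word in `VH` and `C`,
optionally followed by one `V`. A tail of total size `m + 3` starts with `C` or `VH`, and what
follows is a tail of size `m + 1` or `m`; this is the Padovan recursion. Since there is exactly
one tail of each size `0`, `1`, `2`, there are `P (m + 5)` tails of size `m` (`card_tails`).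
The initial block `S₂` or `S₁H` has size `2` or `3`, so the tilings of `n = k + 3` number
`P (k + 6) + P (k + 5) = P (k + 8)`, while for `n = 2` there is only `S₂`.
-/

/-- The types of tiles appearing in the geometric interpretation of the Kauffman bracket
expansion of the 2-bridge Chebyshev diagrams `T(3,b)`. -/
inductive Block : Type
  | S2 | S1H | VH | C | V
  deriving DecidableEq

/-- The number of positions covered by each block. -/
def Block.size : Block → ℕ
  | .S2 => 2
  | .S1H => 3
  | .VH => 3
  | .C => 2
  | .V => 1

/-- An admissible tiling: first one initial block (`S₂` or `S₁H`), then a possibly empty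
sequence of middle blocks (`VH` or `C`), then optionally one final block `V`. -/
def IsAdmissible (l : List Block) : Prop :=
  ∃ (b₀ : Block) (mid tl : List Block),
    l = b₀ :: (mid ++ tl) ∧
    (b₀ = Block.S2 ∨ b₀ = Block.S1H) ∧
    (∀ b ∈ mid, b = Block.VH ∨ b = Block.C) ∧
    (tl = [] ∨ tl = [Block.V])

/-- The Padovan sequence, OEIS A000931: `P 0 = 1`, `P 1 = P 2 = 0`,
`P (m+3) = P (m+1) + P m`. -/
def padovan : ℕ → ℕ
  | 0 => 1
  | 1 => 0
  | 2 => 0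
  | m + 3 => padovan (m + 1) + padovan m

/-- What may follow the initial block of an admissible tiling. -/
def IsTail (l : List Block) : Prop :=
  ∃ mid tl : List Block, l = mid ++ tl ∧
    (∀ b ∈ mid, b = Block.VH ∨ b = Block.C) ∧ (tl = [] ∨ tl = [Block.V])

theorem isTail_nil : IsTail [] := ⟨[], [], by simp⟩

theorem isTail_cons (b : Block) (l : List Block) :
    IsTail (b :: l) ↔ (b = Block.V ∧ l = []) ∨ ((b = Block.VH ∨ b = Block.C) ∧ IsTail l) := by
  constructor
  · rintro ⟨mid, tl, h, hmid, htl⟩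
    cases mid with
    | nil =>
      rcases htl with rfl | rfl
      · simp at h
      · left
        simpa using h
    | cons c mid =>
      obtain ⟨rfl, rfl⟩ : b = c ∧ l = mid ++ tl := by simpa using h
      exact Or.inr ⟨hmid b (by simp), mid, tl, rfl, fun x hx => hmid x (by simp [hx]), htl⟩
  · rintro (⟨rfl, rfl⟩ | ⟨hb, mid, tl, rfl, hmid, htl⟩)
    · exact ⟨[], [Block.V], by simp⟩
    · exact ⟨b :: mid, tl, by simp, by simpa using ⟨hb, hmid⟩, htl⟩

theorem isAdmissible_cons (b : Block) (l : List Block) :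
    IsAdmissible (b :: l) ↔ (b = Block.S2 ∨ b = Block.S1H) ∧ IsTail l := by
  constructor
  · rintro ⟨c, mid, tl, h, hc, hmid, htl⟩
    obtain ⟨rfl, rfl⟩ : b = c ∧ l = mid ++ tl := by simpa using h
    exact ⟨hc, mid, tl, rfl, hmid, htl⟩
  · rintro ⟨hb, mid, tl, rfl, hmid, htl⟩
    exact ⟨b, mid, tl, rfl, hb, hmid, htl⟩

theorem not_isAdmissible_nil : ¬ IsAdmissible [] := by
  rintro ⟨c, mid, tl, h, -⟩
  simp at h

/-- The set of words obtained by putting `b` in front of a word of `s` or `c` in front of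
a word of `t`. -/
def prependUnion (b c : Block) (s t : Finset (List Block)) : Finset (List Block) :=
  s.image (List.cons b) ∪ t.image (List.cons c)

theorem card_prependUnion {b c : Block} (hbc : b ≠ c) (s t : Finset (List Block)) :
    (prependUnion b c s t).card = s.card + t.card := by
  rw [prependUnion, Finset.card_union_of_disjoint,
    Finset.card_image_of_injective _ List.cons_injective,
    Finset.card_image_of_injective _ List.cons_injective]
  rw [Finset.disjoint_left]
  intro l hl hl'
  obtain ⟨x, -, rfl⟩ := Finset.mem_image.1 hl
  obtain ⟨y, -, h⟩ := Finset.mem_image.1 hl'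
  exact hbc (List.cons.inj h).1.symm

theorem nil_notMem_prependUnion (b c : Block) (s t : Finset (List Block)) :
    [] ∉ prependUnion b c s t := by
  simp [prependUnion]

theorem cons_mem_prependUnion (b c d : Block) (l : List Block) (s t : Finset (List Block)) :
    d :: l ∈ prependUnion b c s t ↔ (d = b ∧ l ∈ s) ∨ (d = c ∧ l ∈ t) := by
  simp [prependUnion, eq_comm, and_comm]

/-- The finite set of tails of total size `m`, generated by the Padovan recursion. -/
def tails : ℕ → Finset (List Block)
  | 0 => {[]}
  | 1 => {[Block.V]}
  | 2 => {[Block.C]}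
  | m + 3 => prependUnion Block.C Block.VH (tails (m + 1)) (tails m)

theorem card_tails (m : ℕ) : (tails m).card = padovan (m + 5) := by
  induction m using tails.induct with
  | case1 => rfl
  | case2 => rfl
  | case3 => rfl
  | case4 m ih₁ ih₀ =>
    rw [tails, card_prependUnion (by decide), ih₁, ih₀]
    rfl

theorem mem_tails (m : ℕ) (l : List Block) :
    l ∈ tails m ↔ IsTail l ∧ (l.map Block.size).sum = m := by
  induction l generalizing m with
  | nil =>
    match m with
    | 0 => simp [tails, isTail_nil]
    | 1 => simp [tails]
    | 2 => simp [tails]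
    | m + 3 => simp [tails, nil_notMem_prependUnion]
  | cons b l ih =>
    have h0 : l = [] ↔ IsTail l ∧ (l.map Block.size).sum = 0 := by
      rw [← ih 0]
      simp [tails]
    match m with
    | 0 => cases b <;> simp [tails, isTail_cons, Block.size]
    | 1 =>
      cases b <;> simp [tails, isTail_cons, Block.size] <;> first | omega | grind
    | 2 =>
      cases b <;> simp [tails, isTail_cons, Block.size] <;> first | omega | grind
    | m + 3 =>
      rw [tails, cons_mem_prependUnion, ih, ih, isTail_cons]
      cases b <;> simp [Block.size] <;> grind

/-- For every `n ≥ 2`, the number of admissible tilings of the positions `1,…,n`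
equals the Padovan number `P (n+5)`. -/
theorem card_admissible_tilings (n : ℕ) (hn : 2 ≤ n) :
    Nat.card {l : List Block // IsAdmissible l ∧ (l.map Block.size).sum = n}
      = padovan (n + 5) := by
  -- Sizes are shifted by `2` to avoid truncated subtraction; no `S₁H` tiling has size `2`.
  obtain ⟨k, rfl⟩ := Nat.exists_eq_add_of_le' hn
  let t : Finset (List Block) := match k with
    | 0 => ∅
    | j + 1 => tails j
  have ht : ∀ l, l ∈ t ↔ IsTail l ∧ (l.map Block.size).sum + 1 = k := by
    intro l
    cases k with
    | zero => simp [t]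
    | succ j => simp [t, mem_tails]
  have hcard : padovan (k + 5) + t.card = padovan (k + 2 + 5) := by
    cases k with
    | zero => rfl
    | succ j =>
      simp only [t, card_tails]
      rfl
  rw [← hcard, ← card_tails, ← card_prependUnion (b := Block.S2) (c := Block.S1H)
    (by decide)]
  refine Nat.subtype_card _ fun l => ?_
  cases l with
  | nil => simp [nil_notMem_prependUnion, not_isAdmissible_nil]
  | cons b l =>
    rw [cons_mem_prependUnion, mem_tails, ht, isAdmissible_cons]
    cases b <;> simp [Block.size] <;> grind
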